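/- arXiv:1104.1037 — 5 statements merged into one kernel-verified Lean document; each statement's English description precedes it below -/
import Mathlib

section
/- Let k ≥ 1 and let m₁, …, m_k be even integers with mᵢ ≠ 2 for every i. Then for every integer m, the product X₂ · X₁^{m₁} · X₂ · X₁^{m₂} · X₂ ⋯ X₁^{m_k} · X₂ (containing k+1 factors X₂, with the exponents m₁,…,m_k interleaved) is equal neither to X₁^m nor to −X₁^m. -/
/-- `X₁` is the matrix with rows `(1,0), (1,1)` in `SL(2,ℤ)`. -/
def X₁ : Matrix.SpecialLinearGroup (Fin 2) ℤ :=
  ⟨!![1, 0; 1, 1], by simp [Matrix.det_fin_two_of]⟩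

/-- `X₂` is the matrix with rows `(1,-1), (0,1)` in `SL(2,ℤ)`. -/
def X₂ : Matrix.SpecialLinearGroup (Fin 2) ℤ :=
  ⟨!![1, -1; 0, 1], by simp [Matrix.det_fin_two_of]⟩

/-- The powers of `X₁`. -/
theorem X₁_zpow (m : ℤ) :
    ((X₁ ^ m : Matrix.SpecialLinearGroup (Fin 2) ℤ) : Matrix (Fin 2) (Fin 2) ℤ)
      = !![1, 0; m, 1] := by
  have h1 : (X₁ : Matrix (Fin 2) (Fin 2) ℤ) = !![1, 0; 1, 1] := rfl
  induction m with
  | zero => simp [Matrix.one_fin_two]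
  | succ n ih =>
    rw [zpow_add_one, Matrix.SpecialLinearGroup.coe_mul, ih, h1]
    simp [Matrix.mul_fin_two]
  | pred n ih =>
    rw [zpow_sub_one, Matrix.SpecialLinearGroup.coe_mul, ih,
      Matrix.SpecialLinearGroup.coe_inv, h1, Matrix.adjugate_fin_two_of]
    simp [Matrix.mul_fin_two]
    ring

/-- The absolute value of the upper right entry grows strictly. -/
theorem entry_growth (ms : List ℤ) (heven : ∀ mi ∈ ms, Even mi) (hne2 : ∀ mi ∈ ms, mi ≠ 2) :
    |(X₂ * (ms.map (fun mi => X₁ ^ mi * X₂)).prod).1 0 1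
      + (X₂ * (ms.map (fun mi => X₁ ^ mi * X₂)).prod).1 1 1|
      < |(X₂ * (ms.map (fun mi => X₁ ^ mi * X₂)).prod).1 0 1| := by
  have h2 : (X₂ : Matrix (Fin 2) (Fin 2) ℤ) = !![1, -1; 0, 1] := rfl
  induction ms with
  | nil => simp [h2]
  | cons x l ih =>
    have ih' := ih (fun i hi => heven i (List.mem_cons_of_mem _ hi))
      (fun i hi => hne2 i (List.mem_cons_of_mem _ hi))
    have hx := heven x List.mem_cons_self
    have hx2 := hne2 x List.mem_cons_self
    rw [List.map_cons, List.prod_cons, mul_assoc (X₁ ^ x)]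
    generalize X₂ * (l.map (fun mi => X₁ ^ mi * X₂)).prod = Q at ih' ⊢
    have e0 : (X₂ * (X₁ ^ x * Q)).1 0 1 = Q.1 0 1 - (x * Q.1 0 1 + Q.1 1 1) := by
      rw [Matrix.SpecialLinearGroup.coe_mul, Matrix.SpecialLinearGroup.coe_mul, X₁_zpow, h2]
      simp [Matrix.mul_apply, Fin.sum_univ_two, Matrix.vecMul, dotProduct]
      ring
    have e1 : (X₂ * (X₁ ^ x * Q)).1 1 1 = x * Q.1 0 1 + Q.1 1 1 := by
      rw [Matrix.SpecialLinearGroup.coe_mul, Matrix.SpecialLinearGroup.coe_mul, X₁_zpow, h2]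
      simp [Matrix.mul_apply, Fin.sum_univ_two, Matrix.vecMul, dotProduct]
    rw [e0, e1]
    generalize Q.1 0 1 = a at ih' ⊢
    generalize Q.1 1 1 = b at ih' ⊢
    have h3 : 2 ≤ |2 - x| := by
      obtain ⟨r, rfl⟩ := hx
      rcases le_or_gt (r + r) 2 with h | h
      · rw [abs_of_nonneg (by omega)]; omega
      · rw [abs_of_neg (by omega)]; omega
    have h4 : |(2 - x) * a| ≤ |a - (x * a + b)| + |a + b| := by
      have := abs_add_le (a - (x * a + b)) (a + b)
      have e : a - (x * a + b) + (a + b) = (2 - x) * a := by ring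
      rwa [e] at this
    rw [abs_mul] at h4
    rw [sub_add_cancel]
    nlinarith [abs_nonneg a]

/-- Let `k ≥ 1` and `m₁, …, m_k` be even integers, each `≠ 2`.  Then the product
`X₂ · X₁^{m₁} · X₂ · X₁^{m₂} · X₂ ⋯ X₁^{m_k} · X₂` equals neither `X₁^m` nor `-X₁^m`
for any integer `m`. -/
theorem stmt0 (k : ℕ) (hk : 1 ≤ k) (ms : List ℤ) (hlen : ms.length = k)
    (heven : ∀ mi ∈ ms, Even mi) (hne2 : ∀ mi ∈ ms, mi ≠ 2) (m : ℤ) :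
    X₂ * (ms.map (fun mi => X₁ ^ mi * X₂)).prod ≠ X₁ ^ m ∧
    X₂ * (ms.map (fun mi => X₁ ^ mi * X₂)).prod ≠ -(X₁ ^ m) := by
  have h := entry_growth ms heven hne2
  have h0 : (X₂ * (ms.map (fun mi => X₁ ^ mi * X₂)).prod).1 0 1 ≠ 0 := by
    intro h0
    have := abs_nonneg ((X₂ * (ms.map (fun mi => X₁ ^ mi * X₂)).prod).1 0 1
      + (X₂ * (ms.map (fun mi => X₁ ^ mi * X₂)).prod).1 1 1)
    have h5 := this.trans_lt h
    rw [h0] at h5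
    simp at h5
  constructor
  · intro e
    apply h0
    rw [e, X₁_zpow]
    simp
  · intro e
    apply h0
    rw [e, Matrix.SpecialLinearGroup.coe_neg, X₁_zpow]
    simp
end

section
/- Let k ≥ 1 and let m₁, …, m_k be even integers with mᵢ ≠ 2 for every i. Then the element P = x₂ · x₁^{m₁} · x₂ · x₁^{m₂} ⋯ x₁^{m_k} · x₂ of G can be written either as P = b·S or as P = a²·b·a²·b·S, where S is the product of a nonempty finite list w₁, …, w_r of elements of G such that every wᵢ lies in {a, a², b}, in any two consecutive entries exactly one is equal to b (so the entries alternate between {a, a²} and {b}), and w₁ ∈ {a, a²}. -/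
/-- The free product `(ℤ/3ℤ) ∗ (ℤ/2ℤ)` (isomorphic to `PSL(2,ℤ)`). -/
abbrev G : Type := Monoid.Coprod (Multiplicative (ZMod 3)) (Multiplicative (ZMod 2))

/-- `a` is the image in `G` of the generator of `ℤ/3ℤ`, so `a³ = 1`. -/
def a : G := Monoid.Coprod.inl (Multiplicative.ofAdd (1 : ZMod 3))

/-- `b` is the image in `G` of the generator of `ℤ/2ℤ`, so `b² = 1`. -/
def b : G := Monoid.Coprod.inr (Multiplicative.ofAdd (1 : ZMod 2))

/-- `x₁ = a·b·a`, corresponding to `p(X₁)`. -/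
def x₁ : G := a * b * a

/-- `x₂ = b·a²`, corresponding to `p(X₂)`. -/
def x₂ : G := b * a ^ 2

/-- A list `w₁, …, w_r` is a reduced sequence if every entry lies in `{a, a², b}`,
of any two consecutive entries exactly one equals `b`. -/
def IsReducedSeq (ws : List G) : Prop :=
  (∀ w ∈ ws, w = a ∨ w = a ^ 2 ∨ w = b) ∧
  List.Chain' (fun x y => (x = b ∧ y ≠ b) ∨ (x ≠ b ∧ y = b)) ws

theorem a3 : a ^ 3 = 1 := by
  rw [a, ← map_pow, show (Multiplicative.ofAdd (1 : ZMod 3)) ^ 3 = 1 from by decide, map_one]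

theorem bb : b * b = 1 := by
  rw [b, ← map_mul, show (Multiplicative.ofAdd (1 : ZMod 2)) * Multiplicative.ofAdd (1 : ZMod 2) = 1
    from by decide, map_one]

theorem a_ne_b : a ≠ b := by
  intro h
  have h2 := congrArg (Monoid.Coprod.fst : G →* Multiplicative (ZMod 3)) h
  simp only [a, b, Monoid.Coprod.fst_apply_inl, Monoid.Coprod.fst_apply_inr] at h2
  exact absurd h2 (by decide)

theorem a2_ne_b : a ^ 2 ≠ b := by
  intro h
  have h2 := congrArg (Monoid.Coprod.fst : G →* Multiplicative (ZMod 3)) h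
  simp only [a, b, map_pow, Monoid.Coprod.fst_apply_inl, Monoid.Coprod.fst_apply_inr] at h2
  exact absurd h2 (by decide)

/-- products of nonempty reduced sequences starting with `a` or `a²` -/
def RS (s : G) : Prop :=
  ∃ ws : List G, ws ≠ [] ∧ IsReducedSeq ws ∧
      (ws.head? = some a ∨ ws.head? = some (a ^ 2)) ∧ s = ws.prod

theorem rs_a2 : RS (a ^ 2) :=
  ⟨[a ^ 2], by simp, ⟨by simp, List.isChain_singleton _⟩, by simp, by simp⟩

theorem rs_step {s c : G} (hc : c = a ∨ c = a ^ 2) (h : RS s) : RS (c * (b * s)) := by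
  obtain ⟨ws, h0, ⟨h1, h2⟩, h3, h4⟩ := h
  have hcb : c ≠ b := by
    rcases hc with rfl | rfl
    exacts [a_ne_b, a2_ne_b]
  obtain ⟨w, t, rfl⟩ := List.exists_cons_of_ne_nil h0
  have hw : w ≠ b := by
    simp only [List.head?_cons, Option.some.injEq] at h3
    rcases h3 with rfl | rfl
    exacts [a_ne_b, a2_ne_b]
  refine ⟨c :: b :: w :: t, by simp, ⟨?_, ?_⟩, ?_, ?_⟩
  · intro x hx
    rcases List.mem_cons.1 hx with rfl | hx
    · tauto
    rcases List.mem_cons.1 hx with rfl | hx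
    · tauto
    exact h1 x hx
  · exact List.IsChain.cons_cons (Or.inr ⟨hcb, rfl⟩)
      (List.IsChain.cons_cons (Or.inl ⟨rfl, hw⟩) h2)
  · rcases hc with rfl | rfl <;> simp
  · rw [h4]; simp

theorem rs_pow {s c : G} (hc : c = a ∨ c = a ^ 2) (h : RS s) (n : ℕ) : RS ((c * b) ^ n * s) := by
  induction n with
  | zero => simpa using h
  | succ n ih =>
    rw [pow_succ', mul_assoc, mul_assoc]
    exact rs_step hc ih

theorem a2a2 : a ^ 2 * a ^ 2 = a := by
  rw [← pow_add, show 2 + 2 = 3 + 1 from rfl, pow_add, a3]; simp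

theorem a2a : a ^ 2 * a = 1 := by rw [← pow_succ, a3]

theorem aa2 : a * a ^ 2 = 1 := by rw [← pow_succ', a3]

theorem x1_inv : x₁⁻¹ = a ^ 2 * b * a ^ 2 := by
  apply inv_eq_of_mul_eq_one_right
  calc x₁ * (a ^ 2 * b * a ^ 2) = a * b * (a * a ^ 2) * b * a ^ 2 := by simp only [x₁, mul_assoc]
    _ = a * (b * b) * a ^ 2 := by rw [aa2]; simp only [mul_assoc, one_mul]
    _ = 1 := by rw [bb, mul_one, aa2]

theorem pos_pow (n : ℕ) : x₂ * x₁ ^ (n + 1) = (a ^ 2 * b) ^ n * a := by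
  induction n with
  | zero =>
    calc x₂ * x₁ ^ (0 + 1) = b * (a ^ 2 * a) * b * a := by simp [x₁, x₂, mul_assoc]
      _ = _ := by rw [a2a, mul_one, bb, pow_zero]
  | succ n ih =>
    rw [pow_succ x₁, ← mul_assoc, ih, pow_succ (a ^ 2 * b), x₁, pow_two]
    simp only [mul_assoc]

theorem x_neg_pow (n : ℕ) : x₂ * x₁⁻¹ ^ n = b * (a * b) ^ n * a ^ 2 := by
  induction n with
  | zero => simp [x₂]
  | succ n ih =>
    rw [pow_succ, ← mul_assoc, ih, x1_inv, pow_succ (a * b)]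
    calc _ = b * (a * b) ^ n * (a ^ 2 * a ^ 2) * b * a ^ 2 := by simp only [mul_assoc]
      _ = _ := by rw [a2a2]; simp only [mul_assoc]

theorem main_step (m : ℤ) (he : Even m) (h2 : m ≠ 2) (p : G)
    (hp : ∃ s, RS s ∧ (p = b * s ∨ p = a ^ 2 * b * a ^ 2 * b * s)) :
    ∃ s, RS s ∧ (x₂ * x₁ ^ m * p = b * s ∨ x₂ * x₁ ^ m * p = a ^ 2 * b * a ^ 2 * b * s) := by
  obtain ⟨s, hs, hp⟩ := hp
  by_cases hm : m ≤ 0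
  · obtain ⟨n, rfl⟩ : ∃ n : ℕ, m = -n := ⟨m.natAbs, by omega⟩
    rw [zpow_neg, zpow_natCast, ← inv_pow, x_neg_pow]
    rcases hp with rfl | rfl
    · refine ⟨_, rs_pow (Or.inl rfl) (rs_step (Or.inr rfl) hs) n, Or.inl ?_⟩
      simp only [mul_assoc]
    · refine ⟨_, rs_pow (Or.inl rfl) (rs_step (Or.inl rfl) (rs_step (Or.inr rfl) hs)) n, Or.inl ?_⟩
      calc _ = b * (a * b) ^ n * (a ^ 2 * a ^ 2) * b * a ^ 2 * b * s := by simp only [mul_assoc]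
        _ = _ := by rw [a2a2]; simp only [mul_assoc]
  · obtain ⟨n, rfl⟩ : ∃ n : ℕ, m = (n + 3 + 1 : ℕ) := by
      obtain ⟨r, hr⟩ := he
      exact ⟨(m - 4).toNat, by omega⟩
    rw [zpow_natCast, pos_pow]
    rcases hp with rfl | rfl
    · refine ⟨_, rs_pow (Or.inr rfl) (rs_step (Or.inl rfl) hs) (n + 1), Or.inr ?_⟩
      rw [show n + 3 = 2 + (n + 1) by omega, pow_add, pow_two (a ^ 2 * b)]
      simp only [mul_assoc]
    · refine ⟨_, rs_pow (Or.inr rfl) (rs_step (Or.inl rfl) hs) n, Or.inr ?_⟩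
      rw [show n + 3 = 2 + n + 1 by omega, pow_succ, pow_add, pow_two (a ^ 2 * b)]
      calc _ = a ^ 2 * b * (a ^ 2 * b) * (a ^ 2 * b) ^ n * (a ^ 2 * b * (a * a ^ 2) * b * a ^ 2)
              * b * s := by simp only [mul_assoc]
        _ = a ^ 2 * b * (a ^ 2 * b) * (a ^ 2 * b) ^ n * a * b * s := by
          rw [aa2, mul_one, mul_assoc (a ^ 2) b b, bb, mul_one, a2a2]
        _ = _ := by simp only [mul_assoc]

theorem main_ind (ms : List ℤ) (heven : ∀ mi ∈ ms, Even mi) (hne2 : ∀ mi ∈ ms, mi ≠ 2) :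
    ∃ s, RS s ∧ (x₂ * (ms.map (fun mi => x₁ ^ mi * x₂)).prod = b * s ∨
       x₂ * (ms.map (fun mi => x₁ ^ mi * x₂)).prod = a ^ 2 * b * a ^ 2 * b * s) := by
  induction ms with
  | nil => exact ⟨a ^ 2, rs_a2, Or.inl (by simp [x₂])⟩
  | cons m ms ih =>
    have h := main_step m (heven m (by simp)) (hne2 m (by simp)) _
      (ih (fun x hx => heven x (by simp [hx])) (fun x hx => hne2 x (by simp [hx])))
    simpa only [List.map_cons, List.prod_cons, mul_assoc] using h

/-- Let `k ≥ 1` and `m₁, …, m_k` be even integers, each `≠ 2`.  Then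
`P = x₂ · x₁^{m₁} · x₂ ⋯ x₁^{m_k} · x₂` can be written as `b·S` or as `a²·b·a²·b·S`,
where `S` is the product of a nonempty reduced sequence starting with `a` or `a²`. -/
theorem stmt1 (k : ℕ) (hk : 1 ≤ k) (ms : List ℤ) (hlen : ms.length = k)
    (heven : ∀ mi ∈ ms, Even mi) (hne2 : ∀ mi ∈ ms, mi ≠ 2) :
    ∃ ws : List G, ws ≠ [] ∧ IsReducedSeq ws ∧
      (ws.head? = some a ∨ ws.head? = some (a ^ 2)) ∧
      (x₂ * (ms.map (fun mi => x₁ ^ mi * x₂)).prod = b * ws.prod ∨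
       x₂ * (ms.map (fun mi => x₁ ^ mi * x₂)).prod = a ^ 2 * b * a ^ 2 * b * ws.prod) := by
  obtain ⟨s, ⟨ws, h0, h1, h2, rfl⟩, h⟩ := main_ind ms heven hne2
  exact ⟨ws, h0, h1, h2, h⟩
end

section
/- Let S be the product of a nonempty finite list w₁, …, w_r of elements of G such that every wᵢ lies in {a, a², b}, in any two consecutive entries exactly one is equal to b, and w₁ ∈ {a, a²}. Then for every integer m, b·S ≠ (a·b·a)^m and a²·b·a²·b·S ≠ (a·b·a)^m. -/
/-- Symmetric square of the action of `b`. -/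
def actB : Equiv.Perm (ℤ × ℤ × ℤ) where
  toFun v := (v.2.2, -v.2.1, v.1)
  invFun v := (v.2.2, -v.2.1, v.1)
  left_inv v := by simp
  right_inv v := by simp

/-- Symmetric square of the action of `a`. -/
def actA : Equiv.Perm (ℤ × ℤ × ℤ) where
  toFun v := (v.1 + 2 * v.2.1 + v.2.2, -(v.1 + v.2.1), v.1)
  invFun v := (v.2.2, -(v.2.1 + v.2.2), v.1 + 2 * v.2.1 + v.2.2)
  left_inv v := by ext <;> simp <;> ring
  right_inv v := by ext <;> simp <;> ring

theorem actB_sq : actB ^ 2 = 1 := by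
  ext v <;> simp [actB, pow_succ]

theorem actA_cube : actA ^ 3 = 1 := by
  ext v <;> simp [actA, pow_succ] <;> ring

/-- The homomorphism from a cyclic group given by an element of suitable order. -/
def cycHom {M : Type} [Group M] (n : ℕ) [NeZero n] (x : M) (h : x ^ n = 1) :
    Multiplicative (ZMod n) →* M where
  toFun z := x ^ (Multiplicative.toAdd z).val
  map_one' := by simp
  map_mul' y z := by
    rw [toAdd_mul, ZMod.val_add, ← pow_add, ← pow_eq_pow_mod _ h]

/-- The action of `G`. -/
def act : G →* Equiv.Perm (ℤ × ℤ × ℤ) :=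
  Monoid.Coprod.lift (cycHom 3 actA actA_cube) (cycHom 2 actB actB_sq)

theorem act_a : act a = actA := by
  have : (1 : ZMod 3).val = 1 := rfl
  simp [act, a, cycHom, this]

theorem act_b : act b = actB := by
  have : (1 : ZMod 2).val = 1 := rfl
  simp [act, b, cycHom, this]

theorem act_a_apply (g : G) (v : ℤ × ℤ × ℤ) : act (a * g) v =
    ((act g v).1 + 2 * (act g v).2.1 + (act g v).2.2, -((act g v).1 + (act g v).2.1),
      (act g v).1) := by
  rw [map_mul, act_a]; rfl

theorem act_b_apply (g : G) (v : ℤ × ℤ × ℤ) : act (b * g) v =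
    ((act g v).2.2, -(act g v).2.1, (act g v).1) := by
  rw [map_mul, act_b]; rfl

theorem act_a2_apply (g : G) (v : ℤ × ℤ × ℤ) : act (a ^ 2 * g) v =
    ((act g v).2.2, -((act g v).2.1 + (act g v).2.2),
      (act g v).1 + 2 * (act g v).2.1 + (act g v).2.2) := by
  rw [pow_two, mul_assoc, act_a_apply, act_a_apply]
  ext <;> simp <;> ring

theorem key (ws : List G) (hred : IsReducedSeq ws) : ws = [] ∨
    (0 ≤ (act ws.prod (1, -1, 1)).1 ∧ 0 ≤ (act ws.prod (1, -1, 1)).2.2 ∧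
      ((ws.head? = some b ∧ 0 ≤ (act ws.prod (1, -1, 1)).2.1) ∨
       (ws.head? ≠ some b ∧ (act ws.prod (1, -1, 1)).2.1 ≤ 0))) := by
  induction ws with
  | nil => left; rfl
  | cons x t ih =>
    right
    obtain ⟨hm, hc⟩ := hred
    have hx := hm x (by simp)
    have ht : IsReducedSeq t := ⟨fun w hw => hm w (by simp [hw]), List.IsChain.tail hc⟩
    have ih := ih ht
    rw [List.prod_cons]
    cases t with
    | nil =>
      rcases hx with rfl | rfl | rfl
      · rw [act_a_apply]; simp [a_ne_b]
      · rw [act_a2_apply]; simp [a2_ne_b]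
      · rw [act_b_apply]; simp
    | cons y t =>
      have hxy := (List.isChain_cons_cons.1 hc).1
      generalize hv : act (y :: t).prod (1, -1, 1) = v at ih
      simp only [List.head?_cons, Option.some.injEq, reduceCtorEq, false_or, ne_eq] at ih ⊢
      rcases hx with rfl | rfl | rfl
      · rw [act_a_apply, hv]
        have := a_ne_b
        simp only [this, not_false_eq_true, true_and, false_and, false_or, or_false, ne_eq] at *
        simp only [hxy, not_true, true_and, false_and, or_false] at ih
        omega
      · rw [act_a2_apply, hv]
        have := a2_ne_b
        simp only [this, not_false_eq_true, true_and, false_and, false_or, or_false, ne_eq] at *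
        simp only [hxy, not_true, true_and, false_and, or_false] at ih
        omega
      · rw [act_b_apply, hv]
        simp only [not_true, true_and, false_and, or_false, ne_eq] at *
        simp only [hxy, not_false_eq_true, true_and, false_and, false_or] at ih
        omega

theorem act_fix (m : ℤ) : act ((a * b * a) ^ m) (1, -1, 1) = (1, -1, 1) := by
  have h : act (a * b * a) ∈ MulAction.stabilizer (Equiv.Perm (ℤ × ℤ × ℤ))
      ((1, -1, 1) : ℤ × ℤ × ℤ) := by
    rw [MulAction.mem_stabilizer_iff, map_mul, map_mul, act_a, act_b]
    rfl
  have h2 := zpow_mem h m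
  rw [MulAction.mem_stabilizer_iff] at h2
  rw [map_zpow]
  exact h2

/-- If `S` is the product of a nonempty reduced sequence starting with `a` or `a²`,
then for every integer `m`, `b·S ≠ (a·b·a)^m` and `a²·b·a²·b·S ≠ (a·b·a)^m`. -/
theorem stmt2 (ws : List G) (hne : ws ≠ []) (hred : IsReducedSeq ws)
    (hhead : ws.head? = some a ∨ ws.head? = some (a ^ 2)) (m : ℤ) :
    b * ws.prod ≠ (a * b * a) ^ m ∧
    a ^ 2 * b * a ^ 2 * b * ws.prod ≠ (a * b * a) ^ m := by
  have hk := (key ws hred).resolve_left hne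
  have hb : ws.head? ≠ some b := by
    rcases hhead with h | h <;> rw [h] <;> simp [a_ne_b, a2_ne_b]
  obtain ⟨h1, h2, h3⟩ := hk
  have h3 : (act ws.prod (1, -1, 1)).2.1 ≤ 0 := by
    rcases h3 with h | h
    · exact absurd h.1 hb
    · exact h.2
  constructor
  · intro h
    have := act_fix m
    rw [← h, act_b_apply] at this
    simp only [Prod.mk.injEq] at this
    omega
  · intro h
    have := act_fix m
    rw [← h] at this
    simp only [mul_assoc] at this
    rw [act_a2_apply, act_b_apply, act_a2_apply, act_b_apply] at this
    simp only [Prod.mk.injEq] at this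
    omega
end

section
/- For every integer k ≥ 4 one has x₂ · x₁^k · x₂ = a²·b·a²·(b·a²)^{k−3}·b·a·b·a², and for every integer k ≤ 0 one has x₂ · x₁^k · x₂ = (b·a)^{−k}·b·a²·b·a². -/
/-- For `k ≥ 4`, `x₂·x₁^k·x₂ = a²·b·a²·(b·a²)^{k-3}·b·a·b·a²`, and for `k ≤ 0`,
`x₂·x₁^k·x₂ = (b·a)^{-k}·b·a²·b·a²`. -/
theorem stmt3 (k : ℤ) :
    (4 ≤ k → x₂ * x₁ ^ k * x₂ =
      a ^ 2 * b * a ^ 2 * (b * a ^ 2) ^ (k - 3) * b * a * b * a ^ 2) ∧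
    (k ≤ 0 → x₂ * x₁ ^ k * x₂ = (b * a) ^ (-k) * b * a ^ 2 * b * a ^ 2) := by
  have ha : a ^ 3 = 1 := by
    rw [a, ← map_pow, show (Multiplicative.ofAdd (1 : ZMod 3)) ^ 3 = 1 from by decide, map_one]
  have hb : b * b = 1 := by
    rw [b, ← map_mul,
      show (Multiplicative.ofAdd (1 : ZMod 2)) * Multiplicative.ofAdd (1 : ZMod 2) = 1 from by
        decide, map_one]
  have ha2 : a ^ 2 = a⁻¹ := eq_inv_of_mul_eq_one_left (by rw [← pow_succ, ha])
  have haa : a⁻¹ * a⁻¹ = a := by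
    rw [← ha2, ← pow_add, show 2 + 2 = 3 + 1 from rfl, pow_add, ha, one_mul, pow_one]
  have hbi : b⁻¹ = b := inv_eq_of_mul_eq_one_left hb
  -- `x₁` is conjugate to `b a⁻¹`
  have hx : x₁ = a * (b * a⁻¹) * a⁻¹ := by
    rw [x₁, mul_assoc a (b * a⁻¹), mul_assoc b, haa, mul_assoc]
  have key : x₂ * x₁ ^ k * x₂ = b * (b * a⁻¹) ^ k * a⁻¹ * b * a⁻¹ := by
    rw [hx, conj_zpow, x₂, ha2]
    simp only [mul_assoc, inv_mul_cancel_left]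
  rw [key, ha2]
  refine ⟨fun _ => ?_, fun _ => ?_⟩
  · have hk : (b * a⁻¹) ^ k = (b * a⁻¹) * (b * a⁻¹) * (b * a⁻¹) ^ (k - 3) * (b * a⁻¹) := by
      rw [← zpow_two, ← zpow_add, ← zpow_add_one]
      congr 1
      ring
    have e : b * (b * a⁻¹ * (b * a⁻¹)) = a⁻¹ * b * a⁻¹ := by
      rw [← mul_assoc, ← mul_assoc b b, hb, one_mul, mul_assoc]
    calc b * (b * a⁻¹) ^ k * a⁻¹ * b * a⁻¹
        = b * (b * a⁻¹ * (b * a⁻¹)) * (b * a⁻¹) ^ (k - 3) * b * (a⁻¹ * a⁻¹) * b * a⁻¹ := by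
          rw [hk]; simp only [mul_assoc]
      _ = _ := by rw [e, haa]
  · have h1 : (b * a) ^ (-k) = b * (b * a⁻¹) ^ k * b⁻¹ := by
      rw [← conj_zpow, zpow_neg, ← inv_zpow, mul_inv_rev, hbi, ← mul_assoc b b, hb, one_mul]
    rw [h1]
    simp only [mul_assoc, inv_mul_cancel_left]
end

section
/- Let g = 2k be a positive even integer. Then there exists a quadratic form q : V → ℤ/2ℤ with respect to ω such that: q(γ₁) = 1; q(γ_{2i}) = 1 for every i ∈ {1, …, g}; q(γ_{2j−1} + γ_{2j+1}) = 1 for every j ∈ {1, …, g−1}; and q(γ_{2g−1}) = 0. (Such a q is obtained by setting q(γ_{2i}) = 1 for all i, q(γ_{4j−3}) = 1 and q(γ_{4j−1}) = 0 for all j ∈ {1, …, k}.) -/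
/-- The basis vector `γ_{2i-1}` (the first vector of the `i`-th hyperbolic plane) of
`V = (ℤ/2)^{2g}`, encoded as `Fin g → (ℤ/2)²`. -/
def A (g : ℕ) (i : Fin g) : Fin g → ZMod 2 × ZMod 2 := Pi.single i (1, 0)

/-- The basis vector `γ_{2i}` (the second vector of the `i`-th hyperbolic plane) of
`V = (ℤ/2)^{2g}`, encoded as `Fin g → (ℤ/2)²`. -/
def B (g : ℕ) (i : Fin g) : Fin g → ZMod 2 × ZMod 2 := Pi.single i (0, 1)

/-- The quadratic form: `q(γ_{2i-1})` alternates `1, 0, 1, 0, …` and `q(γ_{2i}) = 1`. -/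
def qform (g : ℕ) (u : Fin g → ZMod 2 × ZMod 2) : ZMod 2 :=
  ∑ i : Fin g, ((((i : ℕ) : ZMod 2) + 1) * (u i).1 + (u i).2 + (u i).1 * (u i).2)

theorem qform_add (g : ℕ) (u v : Fin g → ZMod 2 × ZMod 2) :
    qform g (u + v) = qform g u + qform g v
      + ∑ i, ((u i).1 * (v i).2 + (u i).2 * (v i).1) := by
  unfold qform
  rw [← Finset.sum_add_distrib, ← Finset.sum_add_distrib]
  refine Finset.sum_congr rfl fun i _ => ?_
  simp only [Pi.add_apply, Prod.fst_add, Prod.snd_add]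
  ring

theorem qform_A (g : ℕ) (i : Fin g) : qform g (A g i) = ((i : ℕ) : ZMod 2) + 1 := by
  unfold qform A
  rw [Finset.sum_eq_single i]
  · simp
  · intro j _ hj
    simp [Pi.single_eq_of_ne hj]
  · simp

theorem qform_B (g : ℕ) (i : Fin g) : qform g (B g i) = 1 := by
  unfold qform B
  rw [Finset.sum_eq_single i]
  · simp
  · intro j _ hj
    simp [Pi.single_eq_of_ne hj]
  · simp

theorem omega_A (g : ℕ) (i j : Fin g) :
    ∑ l, ((A g i l).1 * (A g j l).2 + (A g i l).2 * (A g j l).1) = 0 := by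
  have h : ∀ i l : Fin g, (A g i l).2 = 0 := by
    intro i l
    unfold A
    by_cases hl : l = i
    · subst hl
      simp
    · simp [Pi.single_eq_of_ne hl]
  simp [h]

/-- Let `g = 2k` be a positive even integer.  Then there is a quadratic form `q` on
`V = (ℤ/2)^{2g}` with respect to the standard symplectic form `ω` such that
`q(γ₁) = 1`, `q(γ_{2i}) = 1` for all `i ∈ {1,…,g}`, `q(γ_{2j-1} + γ_{2j+1}) = 1` for all
`j ∈ {1,…,g-1}`, and `q(γ_{2g-1}) = 0`. -/
theorem stmt10 (k : ℕ) (hk : 1 ≤ k) :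
    ∃ q : (Fin (2 * k) → ZMod 2 × ZMod 2) → ZMod 2,
      (∀ u v : Fin (2 * k) → ZMod 2 × ZMod 2,
        q (u + v) = q u + q v + ∑ i, ((u i).1 * (v i).2 + (u i).2 * (v i).1)) ∧
      q (A (2 * k) ⟨0, by omega⟩) = 1 ∧
      (∀ i : Fin (2 * k), q (B (2 * k) i) = 1) ∧
      (∀ j : ℕ, ∀ h : j + 1 < 2 * k,
        q (A (2 * k) ⟨j, by omega⟩ + A (2 * k) ⟨j + 1, h⟩) = 1) ∧
      q (A (2 * k) ⟨2 * k - 1, by omega⟩) = 0 := by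
  have h2 : (2 : ZMod 2) = 0 := rfl
  refine ⟨qform (2 * k), qform_add _, ?_, qform_B _, ?_, ?_⟩
  · simp [qform_A]
  · intro j h
    rw [qform_add, qform_A, qform_A, omega_A]
    push_cast
    linear_combination ((j : ZMod 2) + 1) * h2
  · rw [qform_A]
    have h : ((2 * k - 1 + 1 : ℕ) : ZMod 2) = ((2 * k : ℕ) : ZMod 2) := by
      congr 1
      omega
    push_cast at h
    simp only [h2, zero_mul] at h
    exact_mod_cast h
end
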